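/- Theorem (noiseless partial return is not identifiable): Let P_Σr be the noiseless partial return preference model, i.e., P_Σr(σ1 ≻ σ2 | r̃) = 1 if the partial return of σ1 under r̃ strictly exceeds that of σ2, and P_Σr(σ1 ≻ σ2 | r̃) = 0.5 if they are equal. There exists a finite MDP with ground-truth reward r and a second reward function r̂ on the same MDP such that, for a fixed segment length, r and r̂ induce exactly the same noiseless partial-return preference relation over all pairs of segments of that length, yet Π*_{r̂} ≠ Π*_{r}; hence the noiseless partial return preference model is not identifiable. -/

import Mathlib

open scoped BigOperators

/-- The dynamics of a finite MDP: a transition kernel `T` on finite state and action spaces. -/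
structure MDP (S A : Type) [Fintype S] [Fintype A] where
  T : S → A → S → ℝ
  T_nonneg : ∀ s a s', 0 ≤ T s a s'
  T_sum_one : ∀ s a, ∑ s', T s a s' = 1

/-- A (stochastic, memoryless) policy `π : S → Δ(A)`. -/
structure Policy (S A : Type) [Fintype A] where
  p : S → A → ℝ
  nonneg : ∀ s a, 0 ≤ p s a
  sum_one : ∀ s, ∑ a, p s a = 1

variable {S A : Type} [Fintype S] [Fintype A]

/-- Expected reward received at time `t` when starting from state `s` and following `π`. -/
noncomputable def expReward (M : MDP S A) (π : Policy S A) (r : S → A → S → ℝ) :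
    ℕ → S → ℝ
  | 0, s => ∑ a, ∑ s', π.p s a * M.T s a s' * r s a s'
  | t + 1, s => ∑ a, ∑ s', π.p s a * M.T s a s' * expReward M π r t s'

/-- `V^π_{r,γ}`: the expected discounted return of policy `π` from state `s`. -/
noncomputable def Vpi (M : MDP S A) (π : Policy S A) (r : S → A → S → ℝ) (γ : ℝ) (s : S) : ℝ :=
  ∑' t : ℕ, γ ^ t * expReward M π r t s

/-- `Q^π_{r,γ}`: the expected discounted return from `s` taking `a` first, following `π` after. -/
noncomputable def Qpi (M : MDP S A) (π : Policy S A) (r : S → A → S → ℝ) (γ : ℝ)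
    (s : S) (a : A) : ℝ :=
  ∑ s', M.T s a s' * (r s a s' + γ * Vpi M π r γ s')

/-- The optimal state-value function `V*_{r,γ}`. -/
noncomputable def Vstar (M : MDP S A) (r : S → A → S → ℝ) (γ : ℝ) (s : S) : ℝ :=
  ⨆ π : Policy S A, Vpi M π r γ s

/-- The optimal state-action value function `Q*_{r,γ}`. -/
noncomputable def Qstar (M : MDP S A) (r : S → A → S → ℝ) (γ : ℝ) (s : S) (a : A) : ℝ :=
  ⨆ π : Policy S A, Qpi M π r γ s a

/-- `Π*_{(r,γ)}`: the set of optimal policies, those attaining `V*` at every state. -/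
def Pistar (M : MDP S A) (r : S → A → S → ℝ) (γ : ℝ) : Set (Policy S A) :=
  {π | ∀ s, Vpi M π r γ s = Vstar M r γ s}

/-- A segment of length `n`: states `s_0, …, s_n` and actions `a_0, …, a_{n-1}`. -/
abbrev Segment (S A : Type) (n : ℕ) := (Fin (n + 1) → S) × (Fin n → A)

/-- Discounted partial return of a segment: `Σ_{t<n} γ^t r(s_t, a_t, s_{t+1})`. -/
noncomputable def partialReturn {S A : Type} (r : S → A → S → ℝ) (γ : ℝ) {n : ℕ}
    (σ : Segment S A n) : ℝ :=
  ∑ t : Fin n, γ ^ (t : ℕ) * r (σ.1 t.castSucc) (σ.2 t) (σ.1 t.succ)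

/-- Regret of a segment: `Σ_{t<n} γ^t (V*(s_t) − Q*(s_t,a_t))`. -/
noncomputable def segRegret (M : MDP S A) (r : S → A → S → ℝ) (γ : ℝ) {n : ℕ}
    (σ : Segment S A n) : ℝ :=
  ∑ t : Fin n, γ ^ (t : ℕ) *
    (Vstar M r γ (σ.1 t.castSucc) - Qstar M r γ (σ.1 t.castSucc) (σ.2 t))

/-- The logistic function. -/
noncomputable def logistic (x : ℝ) : ℝ := 1 / (1 + Real.exp (-x))

/-- Reward: the safe action `false` gives 1; the risky action `true` gives `X` or `0`
according to the next state. -/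
noncomputable def exRew (X : ℝ) : Bool → Bool → Bool → ℝ :=
  fun _ a s' => if a then (if s' then X else 0) else 1

/-- Every action leads to a uniformly random state. -/
noncomputable def exMDP : MDP Bool Bool where
  T := fun _ _ _ => 1 / 2
  T_nonneg := by intros; norm_num
  T_sum_one := by intros; simp

/-- The policy always playing `b`. -/
noncomputable def exPol (b : Bool) : Policy Bool Bool where
  p := fun _ a => if a = b then 1 else 0
  nonneg := by intros; split_ifs <;> norm_num
  sum_one := by intro s; simp

theorem exV (π : Policy Bool Bool) (X : ℝ) (s : Bool) :
    Vpi exMDP π (exRew X) 0 s = π.p s false + π.p s true * (X / 2) := by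
  unfold Vpi
  rw [tsum_eq_single 0]
  · simp [expReward, exMDP, exRew]; ring
  · intro t ht; simp [ht]

theorem exSum (π : Policy Bool Bool) (s : Bool) : π.p s true + π.p s false = 1 := by
  simpa using π.sum_one s

theorem exPartial (X : ℝ) (σ : Segment Bool Bool 1) :
    partialReturn (exRew X) 0 σ = exRew X (σ.1 0) (σ.2 0) (σ.1 1) := by
  simp [partialReturn]

/-- **Noiseless partial return is not identifiable.**  Under the noiseless partial return
preference model (prefer the segment with strictly greater partial return, indifference on
ties), there exists a finite MDP with ground-truth reward `r` and a second reward function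
`r̂`, and a fixed segment length `n`, such that `r` and `r̂` induce exactly the same noiseless
partial-return preference relation over all pairs of length-`n` segments, yet their sets of
optimal policies differ. -/
theorem noiseless_partial_return_not_identifiable :
    ∃ (S A : Type) (iS : Fintype S) (iA : Fintype A) (_ : Nonempty S) (_ : Nonempty A)
      (M : @MDP S A iS iA) (r rh : S → A → S → ℝ) (γ : ℝ) (n : ℕ),
      0 < n ∧ γ ∈ Set.Icc (0 : ℝ) 1 ∧
      (∀ σ1 σ2 : Segment S A n,
        (partialReturn r γ σ1 < partialReturn r γ σ2 ↔
          partialReturn rh γ σ1 < partialReturn rh γ σ2) ∧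
        (partialReturn r γ σ1 = partialReturn r γ σ2 ↔
          partialReturn rh γ σ1 = partialReturn rh γ σ2)) ∧
      @Pistar S A iS iA M r γ ≠ @Pistar S A iS iA M rh γ := by
  refine ⟨Bool, Bool, inferInstance, inferInstance, inferInstance, inferInstance, exMDP,
    exRew 4, exRew (3 / 2), 0, 1, one_pos, by simp, ?_, ?_⟩
  · intro σ1 σ2
    simp only [exPartial, exRew]
    constructor <;> split_ifs <;> norm_num
  · intro h
    have h1 : exPol false ∈ Pistar exMDP (exRew (3 / 2)) 0 := by
      intro s
      apply le_antisymm
      · refine le_ciSup (f := fun π => Vpi exMDP π (exRew (3 / 2)) 0 s) ⟨1, ?_⟩ (exPol false)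
        rintro _ ⟨π, rfl⟩
        simp only [exV]
        linarith [exSum π s, π.nonneg s true]
      · haveI : Nonempty (Policy Bool Bool) := ⟨exPol false⟩
        refine ciSup_le fun π => ?_
        have h2 : Vpi exMDP (exPol false) (exRew (3 / 2)) 0 s = 1 := by
          rw [exV]; simp [exPol]
        rw [h2, exV]
        linarith [exSum π s, π.nonneg s true]
    rw [← h] at h1
    have h3 := h1 true
    have h4 : Vpi exMDP (exPol true) (exRew 4) 0 true ≤ Vstar exMDP (exRew 4) 0 true := by
      refine le_ciSup (f := fun π => Vpi exMDP π (exRew 4) 0 true) ⟨2, ?_⟩ (exPol true)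
      rintro _ ⟨π, rfl⟩
      simp only [exV]
      linarith [exSum π true, π.nonneg true false]
    rw [← h3, exV, exV] at h4
    norm_num [exPol] at h4
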